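/- For every integer n ≥ 1, the Lorentz cone L_n ⊆ R^{n+1} is resilient, i.e., every linear map P : R^{n+1} → R^{n+1} satisfying P^{⊗k}(L_n^{⊗max k}) ⊆ L_n^{⊗min k} for all k ≥ 1 can be written as P(v) = Σ_{i=1}^m φ_i(v) x_i with x_i ∈ L_n and φ_i in the dual cone of L_n. -/

import Mathlib

open scoped TensorProduct
open Set

noncomputable section

/-- The dual cone of a set `C`, inside the algebraic dual space. -/
def dualConeSet {V : Type*} [AddCommGroup V] [Module ℝ V] (C : Set V) :
    Set (Module.Dual ℝ V) := {φ | ∀ x ∈ C, 0 ≤ φ x}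

/-- A proper cone: a closed convex cone which is generating (`C - C = V`) and
pointed (`C ∩ (-C) = {0}`). -/
def IsProperCone {V : Type*} [NormedAddCommGroup V] [NormedSpace ℝ V] (C : Set V) : Prop :=
  IsClosed C ∧ Convex ℝ C ∧ (∀ ⦃c : ℝ⦄, 0 < c → ∀ ⦃x⦄, x ∈ C → c • x ∈ C) ∧
    (∀ v : V, ∃ x ∈ C, ∃ y ∈ C, v = x - y) ∧ C ∩ (-C) = {0}

/-- `(C₁,C₂)`-entanglement breaking maps. -/
def IsEntanglementBreaking {V₁ V₂ : Type*} [AddCommGroup V₁] [Module ℝ V₁]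
    [AddCommGroup V₂] [Module ℝ V₂] (C₁ : Set V₁) (C₂ : Set V₂) (P : V₁ →ₗ[ℝ] V₂) : Prop :=
  ∃ (m : ℕ) (φ : Fin m → Module.Dual ℝ V₁) (x : Fin m → V₂),
    (∀ i, φ i ∈ dualConeSet C₁) ∧ (∀ i, x i ∈ C₂) ∧ ∀ v, P v = ∑ i, φ i v • x i

/-- The `k`-fold minimal tensor power of a cone. -/
def minTensorPow {V : Type*} [AddCommGroup V] [Module ℝ V] (C : Set V) (k : ℕ) :
    Set (⨂[ℝ] _ : Fin k, V) :=
  convexHull ℝ {z | ∃ x : Fin k → V, (∀ i, x i ∈ C) ∧ z = PiTensorProduct.tprod ℝ x}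

/-- The functional on the `k`-fold tensor power induced by a family of functionals,
`x₁ ⊗ ⋯ ⊗ x_k ↦ ∏ i, φ i (x i)`. -/
def dualPairing {V : Type*} [AddCommGroup V] [Module ℝ V] {k : ℕ}
    (φ : Fin k → Module.Dual ℝ V) : (⨂[ℝ] _ : Fin k, V) →ₗ[ℝ] ℝ :=
  PiTensorProduct.lift ((MultilinearMap.mkPiAlgebra ℝ (Fin k) ℝ).compLinearMap φ)

/-- The `k`-fold maximal tensor power of a cone: the dual of the minimal tensor power of
the dual cone, under the canonical identification of `(V^{⊗k})*` with `(V*)^{⊗k}`. -/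
def maxTensorPow {V : Type*} [AddCommGroup V] [Module ℝ V] (C : Set V) (k : ℕ) :
    Set (⨂[ℝ] _ : Fin k, V) :=
  {z | ∀ φ : Fin k → Module.Dual ℝ V, (∀ i, φ i ∈ dualConeSet C) → 0 ≤ dualPairing φ z}

/-- `(C₁,C₂)`-entanglement annihilating maps: `P^{⊗k}` maps the `k`-fold maximal tensor power
of `C₁` into the `k`-fold minimal tensor power of `C₂`, for every `k ≥ 1`. -/
def IsEntanglementAnnihilating {V₁ V₂ : Type*} [AddCommGroup V₁] [Module ℝ V₁]
    [AddCommGroup V₂] [Module ℝ V₂] (C₁ : Set V₁) (C₂ : Set V₂) (P : V₁ →ₗ[ℝ] V₂) : Prop :=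
  ∀ k : ℕ, 1 ≤ k →
    Set.MapsTo (⇑(PiTensorProduct.map fun _ : Fin k => P))
      (maxTensorPow C₁ k) (minTensorPow C₂ k)

/-- A pair of cones is resilient if every entanglement annihilating map between them is
entanglement breaking. -/
def IsResilientPair {V₁ V₂ : Type*} [AddCommGroup V₁] [Module ℝ V₁]
    [AddCommGroup V₂] [Module ℝ V₂] (C₁ : Set V₁) (C₂ : Set V₂) : Prop :=
  ∀ P : V₁ →ₗ[ℝ] V₂, IsEntanglementAnnihilating C₁ C₂ P → IsEntanglementBreaking C₁ C₂ P

/-- The minimal tensor product of two cones. -/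
def minTensor {V W : Type*} [AddCommGroup V] [Module ℝ V] [AddCommGroup W] [Module ℝ W]
    (C : Set V) (D : Set W) : Set (V ⊗[ℝ] W) :=
  convexHull ℝ {z | ∃ x ∈ C, ∃ y ∈ D, z = x ⊗ₜ[ℝ] y}

/-- The maximal tensor product of two cones: the dual of the minimal tensor product of the
dual cones, under the canonical identification of `(V ⊗ W)*` with `V* ⊗ W*`. -/
def maxTensor {V W : Type*} [AddCommGroup V] [Module ℝ V] [AddCommGroup W] [Module ℝ W]
    (C : Set V) (D : Set W) : Set (V ⊗[ℝ] W) :=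
  {z | ∀ φ ∈ dualConeSet C, ∀ ψ ∈ dualConeSet D,
      0 ≤ TensorProduct.dualDistrib ℝ V W (φ ⊗ₜ[ℝ] ψ) z}

/-- The Lorentz cone `L_n ⊆ ℝ ⊕ ℝⁿ`. -/
def lorentzCone (n : ℕ) : Set (ℝ × EuclideanSpace ℝ (Fin n)) := {p | ‖p.2‖ ≤ p.1}

/-!
By trace duality, `P` is entanglement breaking as soon as `tr (Q ∘ P) ≥ 0` for every `Q` mapping
the target cone into `L_n`: the rank-one maps in question have a compact base, so otherwise `P`
could be separated from them by a functional `tr (Q ∘ ·)`. For such a `Q` the map `R = Q ∘ P` is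
entanglement annihilating on `L_n`, so it suffices to show `tr R ≥ 0`. If `y` is the `(0, 0)` entry
and `A` the `n × n` spatial block of `R`, this follows from `|tr A| ≤ y`.

A `k`-linear form `f` of injective norm at most `1` on `ℝⁿ` gives both an element
`e₀ ⊗ ⋯ ⊗ e₀ + f` of the maximal tensor power and a functional nonnegative on the minimal one.
Pairing the image of the first with the second, for `± f` and `± g`, bounds `⟨f, A^{⊗k} g⟩` by
`y ^ k`. Let `w (u₁, …, u_k) = Γ(u₁) ⋯ Γ(u_k) b`, where the `Γ(u)` are Clifford matrices; then
`‖w u‖ = ∏ ‖uᵢ‖`, so the coordinates of `w` are such forms, and their number `d` does not depend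
on `k`. Taking for `f = g` each coordinate of `w` in turn and averaging over all coordinate sign
changes in each tensor factor leaves only the diagonal terms, whence `|tr A| ^ k ≤ d * y ^ k` for
every `k`, and so `|tr A| ≤ y`.
-/

theorem convexHull_range_eq_image_stdSimplex {ι E : Type*} [Fintype ι] [AddCommGroup E]
    [Module ℝ E] (e : ι → E) :
    convexHull ℝ (range e) = (fun w : ι → ℝ ↦ ∑ i, w i • e i) '' stdSimplex ℝ ι := by
  classical
  have h_linear : (fun w : ι → ℝ ↦ ∑ i, w i • e i) = Fintype.linearCombination ℝ e := by
    ext w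
    rw [Fintype.linearCombination_apply]
  rw [h_linear, ← convexHull_rangle_single_eq_stdSimplex, LinearMap.image_convexHull, ← range_comp]
  congr 2
  ext i
  rw [Function.comp_apply, Fintype.linearCombination_apply_single, one_smul]

theorem exists_fin_range_of_mem_convexHull {E : Type*} [AddCommGroup E] [Module ℝ E]
    [FiniteDimensional ℝ E] {s : Set E} {x : E} (hx : x ∈ convexHull ℝ s) :
    ∃ e : Fin (Module.finrank ℝ E + 1) → E, range e ⊆ s ∧ x ∈ convexHull ℝ (range e) := by
  rw [convexHull_eq_union] at hx
  simp only [mem_iUnion] at hx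
  obtain ⟨t, hts, h_indep, hxt⟩ := hx
  have : Nonempty t := (convexHull_nonempty_iff.1 ⟨x, hxt⟩).to_subtype
  have h_card : Nonempty (t ↪ Fin (Module.finrank ℝ E + 1)) := by
    rw [Function.Embedding.nonempty_iff_card_le, Fintype.card_fin]
    exact h_indep.card_le_finrank_succ.trans (Nat.succ_le_succ (Submodule.finrank_le _))
  obtain ⟨e, he⟩ := Function.exists_surjective_iff.2 ⟨inferInstance, h_card⟩
  have h_range : range (fun i ↦ (e i : E)) = t := by
    rw [range_comp', he.range_eq, image_univ, Subtype.range_coe]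
  exact ⟨fun i ↦ e i, h_range.trans_subset hts, by rwa [h_range]⟩

theorem isCompact_convexHull {E : Type*} [AddCommGroup E] [Module ℝ E] [TopologicalSpace E]
    [ContinuousAdd E] [ContinuousSMul ℝ E] [FiniteDimensional ℝ E] {s : Set E}
    (hs : IsCompact s) : IsCompact (convexHull ℝ s) := by
  let N := Module.finrank ℝ E + 1
  have h_image : convexHull ℝ s = (fun p : (Fin N → ℝ) × (Fin N → E) ↦ ∑ i, p.1 i • p.2 i) ''
      (stdSimplex ℝ (Fin N) ×ˢ univ.pi fun _ ↦ s) := by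
    refine Subset.antisymm (fun x hx ↦ ?_) ?_
    · obtain ⟨e, hes, hxe⟩ := exists_fin_range_of_mem_convexHull hx
      rw [convexHull_range_eq_image_stdSimplex] at hxe
      obtain ⟨w, hw, rfl⟩ := hxe
      exact ⟨(w, e), ⟨hw, fun i _ ↦ hes (mem_range_self i)⟩, rfl⟩
    · rintro _ ⟨⟨w, e⟩, ⟨hw, he⟩, rfl⟩
      exact (convex_convexHull ℝ s).sum_mem (fun i _ ↦ hw.1 i) hw.2
        fun i _ ↦ subset_convexHull ℝ s (he i (mem_univ i))
  rw [h_image]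
  exact ((isCompact_stdSimplex ℝ _).prod (isCompact_univ_pi fun _ ↦ hs)).image (by fun_prop)

theorem mem_pointedCone_hull_of_forall_nonneg {E : Type*} [NormedAddCommGroup E]
    [NormedSpace ℝ E] [FiniteDimensional ℝ E] {G : Set E} (hG : IsCompact G)
    (h0 : 0 ∉ convexHull ℝ G) {x : E}
    (hx : ∀ f : StrongDual ℝ E, (∀ g ∈ G, 0 < f g) → 0 ≤ f x) : x ∈ PointedCone.hull ℝ G := by
  have h_mem : (0 : E) ∈ convexHull ℝ (insert (-x) G) := by
    by_contra h_notMem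
    obtain ⟨f, u, hu, hf⟩ := geometric_hahn_banach_point_closed (convex_convexHull ℝ _)
      (isCompact_convexHull (hG.insert (-x))).isClosed h_notMem
    rw [map_zero] at hu
    have hf_pos : ∀ y ∈ insert (-x) G, 0 < f y := fun y hy ↦
      hu.trans (hf y (subset_convexHull ℝ _ hy))
    have h_neg := hf_pos (-x) (mem_insert _ _)
    rw [map_neg] at h_neg
    linarith [hx f fun g hg ↦ hf_pos g (mem_insert_of_mem _ hg)]
  rcases G.eq_empty_or_nonempty with rfl | hG_ne
  · simp_all
  rw [convexHull_insert hG_ne, mem_convexJoin] at h_mem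
  obtain ⟨_, rfl, g, hg, a, b, ha, hb, hab, h_comb⟩ := h_mem
  have ha_pos : 0 < a := by
    refine ha.lt_of_ne' fun ha0 ↦ h0 ?_
    subst ha0
    obtain rfl : b = 1 := by linarith
    simp_all
  have hxg : x = (b / a) • g := by
    rw [div_eq_inv_mul, mul_smul, eq_inv_smul_iff₀ ha_pos.ne']
    rw [smul_neg, neg_add_eq_zero] at h_comb
    exact h_comb
  rw [hxg]
  exact (PointedCone.hull ℝ G).smul_mem (by positivity)
    (convexHull_min Submodule.subset_span (PointedCone.hull ℝ G).convex hg)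

theorem zero_notMem_convexHull_of_salient {E : Type*} [AddCommGroup E] [Module ℝ E]
    {K : PointedCone ℝ E} (hK : (K : ConvexCone ℝ E).Salient) {G : Set E} (hG : G ⊆ K)
    (h0 : 0 ∉ G) : 0 ∉ convexHull ℝ G := by
  have h_convex : Convex ℝ ((K : Set E) \ {0}) := by
    rintro x ⟨hx, hx0⟩ y ⟨hy, hy0⟩ a b ha hb hab
    have hax : a • x ∈ K := K.smul_mem ha hx
    have hby : b • y ∈ K := K.smul_mem hb hy
    refine ⟨K.add_mem hax hby, fun h_sum ↦ ?_⟩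
    have hax0 : a • x = 0 := by
      by_contra h_ne
      exact hK _ hax h_ne (by rwa [neg_eq_of_add_eq_zero_right h_sum])
    have hby0 : b • y = 0 := by rwa [hax0, mem_singleton_iff, zero_add] at h_sum
    rw [(smul_eq_zero.1 hax0).resolve_right hx0, (smul_eq_zero.1 hby0).resolve_right hy0] at hab
    norm_num at hab
  intro h
  have h_subset : G ⊆ (K : Set E) \ {0} := fun g hg ↦ ⟨hG hg, ne_of_mem_of_not_mem hg h0⟩
  exact (convexHull_min h_subset h_convex h).2 rfl

theorem exists_forall_apply_eq_trace_comp {R M N : Type*} [CommRing R] [AddCommGroup M]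
    [Module R M] [Module.Free R M] [Module.Finite R M] [AddCommGroup N] [Module R N]
    (f : (M →ₗ[R] N) →ₗ[R] R) :
    ∃ Q : N →ₗ[R] M, ∀ P, f P = LinearMap.trace R M (Q ∘ₗ P) := by
  let b := Module.Free.chooseBasis R M
  let Q : N →ₗ[R] M := ∑ j, (f ∘ₗ LinearMap.smulRightₗ (b.coord j)).smulRight (b j)
  refine ⟨Q, fun P ↦ ?_⟩
  have h_trace (j) (x : N) :
      LinearMap.trace R M (Q ∘ₗ (b.coord j).smulRight x) = f ((b.coord j).smulRight x) := by
    have h_comp : Q ∘ₗ (b.coord j).smulRight x = (b.coord j).smulRight (Q x) := by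
      ext v
      simp
    rw [h_comp, LinearMap.trace_smulRight]
    simp [Q, Finsupp.single_apply]
  have hP : P = ∑ j, (b.coord j).smulRight (P (b j)) := by
    refine b.ext fun i ↦ ?_
    simp [Finsupp.single_apply]
  change f P = (LinearMap.trace R M ∘ₗ LinearMap.compRight R Q) P
  rw [hP, map_sum, map_sum]
  exact Finset.sum_congr rfl fun j _ ↦ (h_trace j _).symm

section TraceDuality

variable {V₁ V₂ : Type*} [NormedAddCommGroup V₁] [NormedSpace ℝ V₁] [NormedAddCommGroup V₂]
  [NormedSpace ℝ V₂]

/-- The cone of linear maps sending `C₁` into `C₂`. -/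
def positiveMapCone (C₁ : Set V₁) (C₂ : PointedCone ℝ V₂) : PointedCone ℝ (V₁ →L[ℝ] V₂) where
  carrier := {T | MapsTo T C₁ C₂}
  add_mem' hS hT _ hv := C₂.add_mem (hS hv) (hT hv)
  zero_mem' _ _ := C₂.zero_mem
  smul_mem' r _ hT _ hv := C₂.smul_mem r.2 (hT hv)

theorem salient_positiveMapCone {C₁ : Set V₁} (h₁ : Submodule.span ℝ C₁ = ⊤)
    {C₂ : PointedCone ℝ V₂} (h₂ : (C₂ : ConvexCone ℝ V₂).Salient) :
    (positiveMapCone C₁ C₂ : ConvexCone ℝ (V₁ →L[ℝ] V₂)).Salient := by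
  intro T hT hT0 hT_neg
  refine hT0 (ContinuousLinearMap.coe_injective (LinearMap.ext_on h₁ fun v hv ↦ ?_))
  by_contra hTv
  exact h₂ (T v) (hT hv) hTv (hT_neg hv)

/-- The rank-one maps `v ↦ φ v • x` with `φ` a unit vector of the dual cone of `C₁` and `x` a
unit vector of `C₂`: a compact base of the cone of entanglement breaking maps. -/
def unitRankOneMaps (C₁ : Set V₁) (C₂ : Set V₂) : Set (V₁ →L[ℝ] V₂) :=
  image2 (fun φ x ↦ φ.smulRight x)
    ({φ : StrongDual ℝ V₁ | ∀ v ∈ C₁, 0 ≤ φ v} ∩ Metric.sphere 0 1) (C₂ ∩ Metric.sphere 0 1)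

theorem isCompact_unitRankOneMaps [FiniteDimensional ℝ V₁] [FiniteDimensional ℝ V₂]
    (C₁ : Set V₁) {C₂ : Set V₂} (h₂ : IsClosed C₂) : IsCompact (unitRankOneMaps C₁ C₂) := by
  have h_dual : IsClosed {φ : StrongDual ℝ V₁ | ∀ v ∈ C₁, 0 ≤ φ v} := by
    simp only [ofPred_forall]
    exact isClosed_biInter fun v _ ↦ isClosed_le continuous_const (by fun_prop)
  have : ProperSpace (StrongDual ℝ V₁) := FiniteDimensional.proper_real _
  have : ProperSpace V₂ := FiniteDimensional.proper_real _
  rw [unitRankOneMaps, ← image_prod]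
  exact (((isCompact_sphere 0 1).inter_left h_dual).prod
    ((isCompact_sphere 0 1).inter_left h₂)).image (by fun_prop)

theorem zero_notMem_convexHull_unitRankOneMaps {C₁ : Set V₁}
    (h₁ : Submodule.span ℝ C₁ = ⊤) {C₂ : PointedCone ℝ V₂}
    (h₂ : (C₂ : ConvexCone ℝ V₂).Salient) :
    0 ∉ convexHull ℝ (unitRankOneMaps C₁ (C₂ : Set V₂)) := by
  refine zero_notMem_convexHull_of_salient (salient_positiveMapCone h₁ h₂) ?_ ?_
  · rintro _ ⟨φ, ⟨hφ, -⟩, x, ⟨hx, -⟩, rfl⟩ v hv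
    exact C₂.smul_mem (hφ v hv) hx
  · rintro ⟨φ, ⟨-, hφ⟩, x, ⟨-, hx⟩, h⟩
    have h_norm := congrArg norm h
    rw [ContinuousLinearMap.norm_smulRight_apply] at h_norm
    simp_all

theorem apply_smulRight_nonneg_of_pos_unitRankOneMaps {C₁ : Set V₁} {C₂ : PointedCone ℝ V₂}
    {f : StrongDual ℝ (V₁ →L[ℝ] V₂)} (hf : ∀ T ∈ unitRankOneMaps C₁ (C₂ : Set V₂), 0 < f T)
    {φ : StrongDual ℝ V₁} (hφ : ∀ v ∈ C₁, 0 ≤ φ v) {x : V₂} (hx : x ∈ C₂) :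
    0 ≤ f (φ.smulRight x) := by
  rcases eq_or_ne φ 0 with rfl | hφ0
  · simp
  rcases eq_or_ne x 0 with rfl | hx0
  · simp
  have h_unit : (‖φ‖⁻¹ • φ).smulRight (‖x‖⁻¹ • x) ∈ unitRankOneMaps C₁ (C₂ : Set V₂) :=
    mem_image2_of_mem
      ⟨fun v hv ↦ mul_nonneg (by positivity) (hφ v hv), by simp [norm_smul, hφ0]⟩
      ⟨C₂.smul_mem (by positivity) hx, by simp [norm_smul, hx0]⟩
  have h_scale : φ.smulRight x =
      (‖φ‖ * ‖x‖) • (‖φ‖⁻¹ • φ).smulRight (‖x‖⁻¹ • x) := by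
    ext v
    simp only [ContinuousLinearMap.smulRight_apply, smul_apply, smul_smul, smul_eq_mul]
    congr 1
    field_simp
  rw [h_scale, map_smul]
  exact mul_nonneg (by positivity) (hf _ h_unit).le

theorem isEntanglementBreaking_of_mem_hull_unitRankOneMaps {C₁ : Set V₁} {C₂ : PointedCone ℝ V₂}
    {P : V₁ →L[ℝ] V₂} (hP : P ∈ PointedCone.hull ℝ (unitRankOneMaps C₁ (C₂ : Set V₂))) :
    IsEntanglementBreaking C₁ (C₂ : Set V₂) (P : V₁ →ₗ[ℝ] V₂) := by
  obtain ⟨m, c, T, rfl⟩ := Submodule.mem_span_set'.1 hP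
  choose φ hφ x hx hT using fun i ↦ (T i).2
  refine ⟨m, fun i ↦ (φ i : V₁ →ₗ[ℝ] ℝ), fun i ↦ (c i : ℝ) • x i, fun i ↦ (hφ i).1,
    fun i ↦ C₂.smul_mem (c i).2 (hx i).1, fun v ↦ ?_⟩
  simp only [← hT, ContinuousLinearMap.coe_coe, sum_apply]
  refine Finset.sum_congr rfl fun i _ ↦ ?_
  exact smul_comm (c i : ℝ) (φ i v) (x i)

theorem isEntanglementBreaking_of_trace_comp_nonneg [FiniteDimensional ℝ V₁]
    [FiniteDimensional ℝ V₂] {C₁ : ProperCone ℝ V₁} (h₁ : Submodule.span ℝ (C₁ : Set V₁) = ⊤)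
    {C₂ : ProperCone ℝ V₂} (h₂ : ((C₂ : PointedCone ℝ V₂) : ConvexCone ℝ V₂).Salient)
    {P : V₁ →ₗ[ℝ] V₂}
    (hP : ∀ Q : V₂ →ₗ[ℝ] V₁, MapsTo Q C₂ C₁ → 0 ≤ LinearMap.trace ℝ V₁ (Q ∘ₗ P)) :
    IsEntanglementBreaking (C₁ : Set V₁) (C₂ : Set V₂) P := by
  refine isEntanglementBreaking_of_mem_hull_unitRankOneMaps (C₂ := (C₂ : PointedCone ℝ V₂))
    (P := LinearMap.toContinuousLinearMap P)
    (mem_pointedCone_hull_of_forall_nonneg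
      (isCompact_unitRankOneMaps (C₁ : Set V₁) C₂.isClosed)
      (zero_notMem_convexHull_unitRankOneMaps h₁ h₂) fun f hf ↦ ?_)
  obtain ⟨Q, hQ⟩ := exists_forall_apply_eq_trace_comp
    ((f : (V₁ →L[ℝ] V₂) →ₗ[ℝ] ℝ) ∘ₗ
      (LinearMap.toContinuousLinearMap : (V₁ →ₗ[ℝ] V₂) ≃ₗ[ℝ] (V₁ →L[ℝ] V₂)).toLinearMap)
  have hQ_maps : MapsTo Q C₂ C₁ := by
    intro x hx
    by_contra hQx
    obtain ⟨φ, hφ, hφ_neg⟩ := C₁.hyperplane_separation_point hQx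
    have h_trace : f (φ.smulRight x) = φ (Q x) := by
      have h := hQ ((φ : V₁ →ₗ[ℝ] ℝ).smulRight x)
      have h_comp : Q ∘ₗ (φ : V₁ →ₗ[ℝ] ℝ).smulRight x = (φ : V₁ →ₗ[ℝ] ℝ).smulRight (Q x) := by
        ext v
        simp
      rw [h_comp, LinearMap.trace_smulRight] at h
      exact h
    have h_nonneg := apply_smulRight_nonneg_of_pos_unitRankOneMaps hf hφ hx
    linarith
  exact (hP Q hQ_maps).trans_eq (hQ P).symm

end TraceDuality

section Clifford

theorem exists_clifford_matrix (n : ℕ) : ∃ (κ : Type) (_ : Fintype κ) (_ : DecidableEq κ)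
    (_ : Nonempty κ) (Γ : (Fin n → ℝ) →ₗ[ℝ] Matrix κ κ ℝ),
    ∀ u, (Γ u).IsSymm ∧ Γ u * Γ u = (u ⬝ᵥ u) • 1 := by
  induction n with
  | zero => exact ⟨Unit, inferInstance, inferInstance, inferInstance, 0, by simp [Matrix.IsSymm]⟩
  | succ n ih =>
    obtain ⟨κ, _, _, _, Γ, hΓ⟩ := ih
    let Γ' : (Fin (n + 1) → ℝ) →ₗ[ℝ] Matrix (κ ⊕ κ) (κ ⊕ κ) ℝ :=
      { toFun u := .fromBlocks (u 0 • 1) (Γ (Fin.tail u)) (Γ (Fin.tail u)) (-u 0 • 1)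
        map_add' u v := by
          have h_tail : Fin.tail (u + v) = Fin.tail u + Fin.tail v := rfl
          rw [h_tail, Matrix.fromBlocks_add, map_add, Pi.add_apply, neg_add, add_smul, add_smul]
        map_smul' c u := by
          have h_tail : Fin.tail (c • u) = c • Fin.tail u := rfl
          rw [h_tail, RingHom.id_apply, Matrix.fromBlocks_smul, map_smul, Pi.smul_apply,
            ← smul_neg, smul_assoc, smul_assoc] }
    refine ⟨κ ⊕ κ, inferInstance, inferInstance, inferInstance, Γ', fun u ↦ ?_⟩
    obtain ⟨h_symm, h_sq⟩ := hΓ (Fin.tail u)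
    refine ⟨Matrix.isSymm_fromBlocks_iff.2
      ⟨by simp [Matrix.IsSymm], h_symm, h_symm, by simp [Matrix.IsSymm]⟩, ?_⟩
    have h_dot : u ⬝ᵥ u = u 0 * u 0 + Fin.tail u ⬝ᵥ Fin.tail u := Fin.sum_univ_succ _
    rw [h_dot, ← Matrix.fromBlocks_one, Matrix.fromBlocks_smul]
    simp only [Γ', LinearMap.coe_mk, AddHom.coe_mk, Matrix.fromBlocks_multiply, h_sq]
    congr 1 <;> simp [smul_smul, add_smul, add_comm]

theorem norm_sq_eq_dotProduct {κ : Type*} [Fintype κ] (x : EuclideanSpace ℝ κ) :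
    ‖x‖ ^ 2 = x.ofLp ⬝ᵥ x.ofLp :=
  (EuclideanSpace.real_norm_sq_eq x).trans (Finset.sum_congr rfl fun _ _ ↦ sq _)

theorem norm_sq_toEuclideanLin_of_isSymm {κ : Type*} [Fintype κ] [DecidableEq κ]
    {A : Matrix κ κ ℝ} (hA : A.IsSymm) {c : ℝ} (hAA : A * A = c • 1) (x : EuclideanSpace ℝ κ) :
    ‖A.toEuclideanLin x‖ ^ 2 = c * ‖x‖ ^ 2 := by
  rw [norm_sq_eq_dotProduct, norm_sq_eq_dotProduct, Matrix.ofLp_toLpLin, Matrix.toLin'_apply,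
    Matrix.dotProduct_mulVec, ← Matrix.mulVec_transpose, hA.eq, Matrix.mulVec_mulVec, hAA,
    Matrix.smul_mulVec, Matrix.one_mulVec, smul_dotProduct, smul_eq_mul]

theorem exists_end_norm_apply_eq_mul (n : ℕ) : ∃ (κ : Type) (_ : Fintype κ) (_ : Nonempty κ)
    (Γ : EuclideanSpace ℝ (Fin n) →ₗ[ℝ] Module.End ℝ (EuclideanSpace ℝ κ)),
    ∀ u x, ‖Γ u x‖ = ‖u‖ * ‖x‖ := by
  obtain ⟨κ, _, _, _, Γ, hΓ⟩ := exists_clifford_matrix n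
  refine ⟨κ, inferInstance, inferInstance, Matrix.toEuclideanLin.toLinearMap ∘ₗ Γ ∘ₗ
    (WithLp.linearEquiv 2 ℝ (Fin n → ℝ)).toLinearMap, fun u x ↦ ?_⟩
  obtain ⟨h_symm, h_sq⟩ := hΓ u.ofLp
  rw [← norm_sq_eq_dotProduct] at h_sq
  rw [← sq_eq_sq₀ (norm_nonneg _) (by positivity), mul_pow]
  exact norm_sq_toEuclideanLin_of_isSymm h_symm h_sq x

theorem exists_multilinearMap_norm_eq_prod {E H : Type*} [SeminormedAddCommGroup E]
    [NormedSpace ℝ E] [SeminormedAddCommGroup H] [NormedSpace ℝ H]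
    {Γ : E →ₗ[ℝ] Module.End ℝ H} (hΓ : ∀ u x, ‖Γ u x‖ = ‖u‖ * ‖x‖) {b : H} (hb : ‖b‖ = 1)
    (k : ℕ) :
    ∃ w : MultilinearMap ℝ (fun _ : Fin k ↦ E) H, ∀ u, ‖w u‖ = ∏ i, ‖u i‖ := by
  refine ⟨(LinearMap.applyₗ b).compMultilinearMap
    ((MultilinearMap.mkPiAlgebraFin ℝ k (Module.End ℝ H)).compLinearMap fun _ ↦ Γ), fun u ↦ ?_⟩
  change ‖(List.ofFn fun i ↦ Γ (u i)).prod b‖ = _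
  induction k with
  | zero => simpa using hb
  | succ k ih =>
    rw [List.ofFn_succ, List.prod_cons, Module.End.mul_apply, hΓ, ih, Fin.prod_univ_succ]

end Clifford

theorem le_of_forall_pow_le_mul_pow {a b C : ℝ} (hb : 0 ≤ b)
    (h : ∀ k : ℕ, 1 ≤ k → a ^ k ≤ C * b ^ k) : a ≤ b := by
  by_contra! hab
  have ha : 0 < a := hb.trans_lt hab
  obtain ⟨k, hk⟩ := exists_pow_lt_of_lt_one (show 0 < 1 / (|C| + 1) by positivity)
    ((div_lt_one ha).2 hab)
  have hk_pos : 1 ≤ k := by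
    refine Nat.one_le_iff_ne_zero.2 fun hk0 ↦ hk.not_ge ?_
    rw [hk0, pow_zero, div_le_one (by positivity)]
    linarith [abs_nonneg C]
  rw [div_pow, div_lt_div_iff₀ (by positivity) (by positivity), one_mul] at hk
  have h_le : C * b ^ k ≤ |C| * b ^ k := by
    gcongr
    exact le_abs_self C
  linarith [h k hk_pos, pow_nonneg hb k]

section SignFlip

variable {ι : Type*}

/-- The diagonal operator with entries `±1` given by `t`. -/
def signFlip (t : ι → ℤˣ) : EuclideanSpace ℝ ι →ₗ[ℝ] EuclideanSpace ℝ ι where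
  toFun v := WithLp.toLp 2 fun i ↦ (t i : ℝ) * v i
  map_add' u v := by
    ext i
    exact mul_add _ _ _
  map_smul' c v := by
    ext i
    exact mul_left_comm _ _ _

theorem norm_signFlip [Fintype ι] (t : ι → ℤˣ) (v : EuclideanSpace ℝ ι) : ‖signFlip t v‖ = ‖v‖ := by
  have h_sq (i) : (t i : ℝ) ^ 2 = 1 := by
    rw [← Int.cast_pow, ← Units.val_pow_eq_pow_val, Int.units_sq, Units.val_one, Int.cast_one]
  simp [EuclideanSpace.norm_eq, signFlip, mul_pow, h_sq]

theorem signFlip_single [DecidableEq ι] (t : ι → ℤˣ) (j : ι) :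
    signFlip t (EuclideanSpace.single j 1) = (t j : ℝ) • EuclideanSpace.single j 1 := by
  ext i
  rcases eq_or_ne i j with rfl | hij
  · simp [signFlip]
  · simp [signFlip, hij]

variable [Fintype ι] [DecidableEq ι]

theorem sum_sign_mul_sign (i j : ι) :
    ∑ t : ι → ℤˣ, (t j : ℝ) * t i = if i = j then 2 ^ Fintype.card ι else 0 := by
  split_ifs with hij
  · subst hij
    simp [← Int.cast_mul]
  · have h_neg := Equiv.sum_comp (Equiv.mulLeft (Pi.mulSingle j (-1 : ℤˣ)))
      fun t : ι → ℤˣ ↦ (t j : ℝ) * t i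
    simp only [Equiv.coe_mulLeft, Pi.mul_apply, Pi.mulSingle_eq_same,
      Pi.mulSingle_eq_of_ne hij, one_mul] at h_neg
    simpa [self_eq_neg, Finset.sum_neg_distrib] using h_neg.symm

theorem sum_sign_smul_signFlip (j : ι) (v : EuclideanSpace ℝ ι) :
    ∑ t : ι → ℤˣ, (t j : ℝ) • signFlip t v =
      (2 ^ Fintype.card ι * v j) • EuclideanSpace.single j 1 := by
  ext i
  have h_sum : (∑ t : ι → ℤˣ, (t j : ℝ) • signFlip t v) i =
      (∑ t : ι → ℤˣ, (t j : ℝ) * t i) * v i := by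
    rw [WithLp.ofLp_sum, Finset.sum_apply, Finset.sum_mul]
    exact Finset.sum_congr rfl fun t _ ↦ (mul_assoc _ _ _).symm
  rw [h_sum, sum_sign_mul_sign]
  rcases eq_or_ne i j with rfl | hij
  · simp
  · simp [hij]

end SignFlip

section SignAverage

open scoped InnerProductSpace

variable {ι : Type*} [Fintype ι] [DecidableEq ι]

theorem trace_eq_sum_apply_single (A : Module.End ℝ (EuclideanSpace ℝ ι)) :
    LinearMap.trace ℝ _ A = ∑ j, A (EuclideanSpace.single j 1) j := by
  rw [LinearMap.trace_eq_sum_inner A (EuclideanSpace.basisFun ι ℝ)]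
  simp [EuclideanSpace.basisFun_apply, EuclideanSpace.inner_single_left]

theorem sum_inner_signFlip_eq_trace_pow {H : Type*} [NormedAddCommGroup H]
    [InnerProductSpace ℝ H] {k : ℕ}
    {w : MultilinearMap ℝ (fun _ : Fin k ↦ EuclideanSpace ℝ ι) H}
    (hw : ∀ I : Fin k → ι, ‖w fun i ↦ EuclideanSpace.single (I i) 1‖ = 1)
    (A : Module.End ℝ (EuclideanSpace ℝ ι)) :
    ∑ s : Fin k → ι → ℤˣ, ∑ I : Fin k → ι,
      ⟪w fun i ↦ signFlip (s i) (EuclideanSpace.single (I i) 1),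
        w fun i ↦ signFlip (s i) (A (EuclideanSpace.single (I i) 1))⟫_ℝ =
      (2 ^ Fintype.card ι * LinearMap.trace ℝ _ A) ^ k := by
  have h_average (I : Fin k → ι) : ∑ s : Fin k → ι → ℤˣ,
      ⟪w fun i ↦ signFlip (s i) (EuclideanSpace.single (I i) 1),
        w fun i ↦ signFlip (s i) (A (EuclideanSpace.single (I i) 1))⟫_ℝ =
      ∏ i, 2 ^ Fintype.card ι * A (EuclideanSpace.single (I i) 1) (I i) := by
    simp_rw [signFlip_single, w.map_smul_univ, real_inner_smul_left, ← real_inner_smul_right,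
      ← w.map_smul_univ, ← inner_sum]
    rw [← w.map_sum fun i (t : ι → ℤˣ) ↦
      (t (I i) : ℝ) • signFlip t (A (EuclideanSpace.single (I i) 1))]
    simp_rw [sum_sign_smul_signFlip, w.map_smul_univ, real_inner_smul_right,
      real_inner_self_eq_norm_sq, hw, one_pow, mul_one]
  rw [Finset.sum_comm, trace_eq_sum_apply_single, Finset.mul_sum, Fintype.sum_pow]
  exact Finset.sum_congr rfl fun I _ ↦ h_average I

end SignAverage

theorem trace_prod_eq_add {K M N : Type*} [CommRing K] [AddCommGroup M] [Module K M]
    [Module.Free K M] [Module.Finite K M] [AddCommGroup N] [Module K N] [Module.Free K N]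
    [Module.Finite K N] (R : Module.End K (M × N)) :
    LinearMap.trace K (M × N) R =
      LinearMap.trace K M (LinearMap.fst K M N ∘ₗ R ∘ₗ LinearMap.inl K M N) +
        LinearMap.trace K N (LinearMap.snd K M N ∘ₗ R ∘ₗ LinearMap.inr K M N) := by
  have h_sum : R = (R ∘ₗ LinearMap.inl K M N) ∘ₗ LinearMap.fst K M N +
      (R ∘ₗ LinearMap.inr K M N) ∘ₗ LinearMap.snd K M N := by
    refine LinearMap.ext fun p ↦ ?_
    simp [← map_add]
  conv_lhs => rw [h_sum, map_add]
  rw [LinearMap.trace_comp_comm' (LinearMap.fst K M N),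
    LinearMap.trace_comp_comm' (LinearMap.snd K M N)]

section TensorPower

variable {V W : Type*} [AddCommGroup V] [Module ℝ V] [AddCommGroup W] [Module ℝ W]

theorem mapsTo_map_minTensorPow {C : Set V} {D : Set W} {Q : V →ₗ[ℝ] W} (hQ : MapsTo Q C D)
    (k : ℕ) : MapsTo (PiTensorProduct.map fun _ : Fin k ↦ Q) (minTensorPow C k)
      (minTensorPow D k) := by
  refine mapsTo_iff_subset_preimage.2 (convexHull_min ?_
    ((convex_convexHull ℝ _).linear_preimage _))
  rintro _ ⟨x, hx, rfl⟩
  exact subset_convexHull ℝ _ ⟨fun i ↦ Q (x i), fun i ↦ hQ (hx i), PiTensorProduct.map_tprod _ _⟩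

theorem IsEntanglementAnnihilating.comp_left {U : Type*} [AddCommGroup U] [Module ℝ U]
    {B : Set U} {C : Set V} {D : Set W} {P : U →ₗ[ℝ] V} (hP : IsEntanglementAnnihilating B C P)
    {Q : V →ₗ[ℝ] W} (hQ : MapsTo Q C D) : IsEntanglementAnnihilating B D (Q ∘ₗ P) := by
  intro k hk z hz
  rw [PiTensorProduct.map_comp]
  exact mapsTo_map_minTensorPow hQ k (hP k hk hz)

end TensorPower

section Lorentz

open scoped InnerProductSpace

variable {n k : ℕ}

theorem norm_sum_dual_smul_single_le {φ : Module.Dual ℝ (ℝ × EuclideanSpace ℝ (Fin n))}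
    (hφ : φ ∈ dualConeSet (lorentzCone n)) :
    ‖∑ j, φ (0, EuclideanSpace.single j 1) • EuclideanSpace.single j (1 : ℝ)‖ ≤ φ (1, 0) := by
  set r : EuclideanSpace ℝ (Fin n) :=
    ∑ j, φ (0, EuclideanSpace.single j 1) • EuclideanSpace.single j (1 : ℝ) with hr
  have h_coord (j) : r j = φ (0, EuclideanSpace.single j 1) := by
    simp [hr, Pi.single_apply]
  have h_self : φ (0, r) = ‖r‖ ^ 2 := by
    change (φ ∘ₗ LinearMap.inr ℝ _ _) r = _
    rw [EuclideanSpace.real_norm_sq_eq]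
    conv_lhs => rw [hr, map_sum]
    simp [h_coord, sq]
  have h_test : 0 ≤ ‖r‖ * (φ (1, 0) - ‖r‖) := by
    have h_decomp : (‖r‖, -r) = ‖r‖ • ((1, 0) : ℝ × EuclideanSpace ℝ (Fin n)) - (0, r) := by simp
    have h_mem : (‖r‖, -r) ∈ lorentzCone n := (norm_neg r).le
    have h_nonneg := hφ _ h_mem
    rw [h_decomp, map_sub, map_smul, h_self, smul_eq_mul] at h_nonneg
    linarith
  rcases (norm_nonneg r).eq_or_lt with hr0 | hr_pos
  · rw [← hr0]
    exact hφ (1, 0) (by simp [lorentzCone])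
  · exact sub_nonneg.1 (nonneg_of_mul_nonneg_right h_test hr_pos)

/-- The tensor whose pairing with `φ₁ ⊗ ⋯ ⊗ φ_k` is `∏ i, φ i (1, 0) + f (r₁, …, r_k)`, where
`r i` is the vector representing `φ i` on the spatial component. -/
def lorentzState (f : MultilinearMap ℝ (fun _ : Fin k ↦ EuclideanSpace ℝ (Fin n)) ℝ) :
    ⨂[ℝ] _ : Fin k, ℝ × EuclideanSpace ℝ (Fin n) :=
  PiTensorProduct.tprod ℝ (fun _ ↦ (1, 0)) +
    ∑ I : Fin k → Fin n, f (fun i ↦ EuclideanSpace.single (I i) 1) •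
      PiTensorProduct.tprod ℝ fun i ↦ (0, EuclideanSpace.single (I i) 1)

theorem lorentzState_mem_maxTensorPow
    {f : MultilinearMap ℝ (fun _ : Fin k ↦ EuclideanSpace ℝ (Fin n)) ℝ}
    (hf : ∀ u, |f u| ≤ ∏ i, ‖u i‖) : lorentzState f ∈ maxTensorPow (lorentzCone n) k := by
  intro φ hφ
  let r (i : Fin k) : EuclideanSpace ℝ (Fin n) :=
    ∑ j, φ i (0, EuclideanSpace.single j 1) • EuclideanSpace.single j 1
  have h_pairing : dualPairing φ (lorentzState f) = ∏ i, φ i (1, 0) + f r := by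
    have h_expand : f r = ∑ I : Fin k → Fin n, f (fun i ↦ EuclideanSpace.single (I i) 1) *
        ∏ i, φ i (0, EuclideanSpace.single (I i) 1) := by
      simp only [r, f.map_sum, f.map_smul_univ, smul_eq_mul, mul_comm]
    rw [h_expand]
    simp [lorentzState, dualPairing]
  have h_bound : |f r| ≤ ∏ i, φ i (1, 0) := (hf r).trans
    (Finset.prod_le_prod (fun i _ ↦ norm_nonneg _) fun i _ ↦ norm_sum_dual_smul_single_le (hφ i))
  rw [h_pairing]
  linarith [neg_le_of_abs_le h_bound]

/-- The functional on the `k`-fold tensor power with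
`(t₁, u₁) ⊗ ⋯ ⊗ (t_k, u_k) ↦ t₁ ⋯ t_k + g (u₁, …, u_k)`. -/
def lorentzWitness (g : MultilinearMap ℝ (fun _ : Fin k ↦ EuclideanSpace ℝ (Fin n)) ℝ) :
    (⨂[ℝ] _ : Fin k, ℝ × EuclideanSpace ℝ (Fin n)) →ₗ[ℝ] ℝ :=
  PiTensorProduct.lift
    ((MultilinearMap.mkPiAlgebra ℝ (Fin k) ℝ).compLinearMap (fun _ ↦ LinearMap.fst ℝ _ _) +
      g.compLinearMap fun _ ↦ LinearMap.snd ℝ _ _)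

theorem lorentzWitness_tprod
    (g : MultilinearMap ℝ (fun _ : Fin k ↦ EuclideanSpace ℝ (Fin n)) ℝ)
    (x : Fin k → ℝ × EuclideanSpace ℝ (Fin n)) :
    lorentzWitness g (PiTensorProduct.tprod ℝ x) = ∏ i, (x i).1 + g fun i ↦ (x i).2 := by
  simp [lorentzWitness]

theorem lorentzWitness_nonneg
    {g : MultilinearMap ℝ (fun _ : Fin k ↦ EuclideanSpace ℝ (Fin n)) ℝ}
    (hg : ∀ u, |g u| ≤ ∏ i, ‖u i‖) {z : ⨂[ℝ] _ : Fin k, ℝ × EuclideanSpace ℝ (Fin n)}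
    (hz : z ∈ minTensorPow (lorentzCone n) k) : 0 ≤ lorentzWitness g z := by
  refine convexHull_min ?_ (convex_halfSpace_ge (lorentzWitness g).isLinear 0) hz
  rintro _ ⟨x, hx, rfl⟩
  have h_bound : |g fun i ↦ (x i).2| ≤ ∏ i, (x i).1 :=
    (hg _).trans (Finset.prod_le_prod (fun i _ ↦ norm_nonneg _) fun i _ ↦ hx i)
  change 0 ≤ lorentzWitness g _
  rw [lorentzWitness_tprod]
  linarith [neg_le_of_abs_le h_bound]

variable {R : Module.End ℝ (ℝ × EuclideanSpace ℝ (Fin n))}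

/-- The spatial block of an endomorphism of `ℝ × ℝⁿ`. -/
def spatialBlock (R : Module.End ℝ (ℝ × EuclideanSpace ℝ (Fin n))) :
    Module.End ℝ (EuclideanSpace ℝ (Fin n)) :=
  LinearMap.snd ℝ _ _ ∘ₗ R ∘ₗ LinearMap.inr ℝ _ _

theorem trace_eq_fst_add_trace_spatialBlock :
    LinearMap.trace ℝ _ R = (R (1, 0)).1 + LinearMap.trace ℝ _ (spatialBlock R) := by
  have h_time : LinearMap.fst ℝ _ _ ∘ₗ R ∘ₗ LinearMap.inl ℝ _ _ =
      LinearMap.id.smulRight (R (1, 0)).1 := by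
    ext
    simp
  rw [trace_prod_eq_add, h_time, LinearMap.trace_smulRight, LinearMap.id_apply, spatialBlock]

theorem lorentzWitness_map_lorentzState
    (f g : MultilinearMap ℝ (fun _ : Fin k ↦ EuclideanSpace ℝ (Fin n)) ℝ) :
    lorentzWitness g (PiTensorProduct.map (fun _ ↦ R) (lorentzState f)) =
      (R (1, 0)).1 ^ k + g (fun _ ↦ (R (1, 0)).2) +
      ∑ I : Fin k → Fin n, f (fun i ↦ EuclideanSpace.single (I i) 1) *
        (∏ i, (R (0, EuclideanSpace.single (I i) 1)).1 +
          g fun i ↦ spatialBlock R (EuclideanSpace.single (I i) 1)) := by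
  simp [lorentzState, lorentzWitness_tprod, spatialBlock, map_sum]

theorem IsEntanglementAnnihilating.abs_sum_mul_spatialBlock_le
    (hR : IsEntanglementAnnihilating (lorentzCone n) (lorentzCone n) R) (hk : 1 ≤ k)
    {f g : MultilinearMap ℝ (fun _ : Fin k ↦ EuclideanSpace ℝ (Fin n)) ℝ}
    (hf : ∀ u, |f u| ≤ ∏ i, ‖u i‖) (hg : ∀ u, |g u| ≤ ∏ i, ‖u i‖) :
    |∑ I : Fin k → Fin n, f (fun i ↦ EuclideanSpace.single (I i) 1) *
      g fun i ↦ spatialBlock R (EuclideanSpace.single (I i) 1)| ≤ (R (1, 0)).1 ^ k := by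
  have h_nonneg {f' g'} (hf' : ∀ u, |f' u| ≤ ∏ i, ‖u i‖) (hg' : ∀ u, |g' u| ≤ ∏ i, ‖u i‖) :
      0 ≤ lorentzWitness g' (PiTensorProduct.map (fun _ ↦ R) (lorentzState f')) :=
    lorentzWitness_nonneg hg' (hR k hk (lorentzState_mem_maxTensorPow hf'))
  have hf_neg : ∀ u, |(-f) u| ≤ ∏ i, ‖u i‖ := fun u ↦ (abs_neg _).trans_le (hf u)
  have hg_neg : ∀ u, |(-g) u| ≤ ∏ i, ‖u i‖ := fun u ↦ (abs_neg _).trans_le (hg u)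
  have h₁ := h_nonneg hf hg
  have h₂ := h_nonneg hf_neg hg_neg
  have h₃ := h_nonneg hf hg_neg
  have h₄ := h_nonneg hf_neg hg
  simp only [lorentzWitness_map_lorentzState, neg_apply, mul_add, neg_mul, mul_neg,
    Finset.sum_add_distrib, Finset.sum_neg_distrib] at h₁ h₂ h₃ h₄
  exact abs_le.2 ⟨by linarith, by linarith⟩

theorem IsEntanglementAnnihilating.abs_sum_inner_spatialBlock_le
    (hR : IsEntanglementAnnihilating (lorentzCone n) (lorentzCone n) R) (hk : 1 ≤ k)
    {κ H : Type*} [Fintype κ] [NormedAddCommGroup H] [InnerProductSpace ℝ H]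
    (b : OrthonormalBasis κ ℝ H)
    {w : MultilinearMap ℝ (fun _ : Fin k ↦ EuclideanSpace ℝ (Fin n)) H}
    (hw : ∀ u, ‖w u‖ ≤ ∏ i, ‖u i‖) :
    |∑ I : Fin k → Fin n, ⟪w fun i ↦ EuclideanSpace.single (I i) 1,
      w fun i ↦ spatialBlock R (EuclideanSpace.single (I i) 1)⟫_ℝ| ≤
      Fintype.card κ * (R (1, 0)).1 ^ k := by
  let f (a : κ) := (innerₗ H (b a)).compMultilinearMap w
  have hf (a : κ) (u) : |f a u| ≤ ∏ i, ‖u i‖ := by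
    refine (abs_real_inner_le_norm _ _).trans ?_
    rw [b.norm_eq_one, one_mul]
    exact hw u
  have h_parseval (u v) : ⟪w u, w v⟫_ℝ = ∑ a, f a u * f a v := by
    rw [← b.sum_inner_mul_inner]
    exact Finset.sum_congr rfl fun a _ ↦ by rw [real_inner_comm]; rfl
  simp only [h_parseval]
  rw [Finset.sum_comm]
  refine (Finset.abs_sum_le_sum_abs _ _).trans ?_
  refine (Finset.sum_le_card_nsmul _ _ _ fun a _ ↦
    hR.abs_sum_mul_spatialBlock_le hk (hf a) (hf a)).trans_eq ?_
  rw [Finset.card_univ, nsmul_eq_mul]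

theorem IsEntanglementAnnihilating.abs_trace_spatialBlock_pow_le
    (hR : IsEntanglementAnnihilating (lorentzCone n) (lorentzCone n) R) (hk : 1 ≤ k)
    {κ H : Type*} [Fintype κ] [NormedAddCommGroup H] [InnerProductSpace ℝ H]
    (b : OrthonormalBasis κ ℝ H)
    {w : MultilinearMap ℝ (fun _ : Fin k ↦ EuclideanSpace ℝ (Fin n)) H}
    (hw : ∀ u, ‖w u‖ = ∏ i, ‖u i‖) :
    |LinearMap.trace ℝ _ (spatialBlock R)| ^ k ≤ Fintype.card κ * (R (1, 0)).1 ^ k := by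
  have h_flip (s : Fin k → Fin n → ℤˣ) (u) :
      ‖w.compLinearMap (fun i ↦ signFlip (s i)) u‖ ≤ ∏ i, ‖u i‖ := by
    simp only [MultilinearMap.compLinearMap_apply, hw, norm_signFlip, le_refl]
  have h_sum := sum_inner_signFlip_eq_trace_pow (w := w) (fun I ↦ by simp [hw]) (spatialBlock R)
  have h_le : |(2 ^ n * LinearMap.trace ℝ _ (spatialBlock R)) ^ k| ≤
      (2 ^ n) ^ k * (Fintype.card κ * (R (1, 0)).1 ^ k) := by
    rw [Fintype.card_fin] at h_sum
    rw [← h_sum]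
    refine (Finset.abs_sum_le_sum_abs _ _).trans ((Finset.sum_le_card_nsmul _ _ _
      fun s _ ↦ hR.abs_sum_inner_spatialBlock_le hk b (h_flip s)).trans_eq ?_)
    simp
  rw [mul_pow, abs_mul, abs_of_pos (by positivity), abs_pow] at h_le
  exact le_of_mul_le_mul_left h_le (by positivity)

theorem IsEntanglementAnnihilating.trace_nonneg
    (hR : IsEntanglementAnnihilating (lorentzCone n) (lorentzCone n) R) :
    0 ≤ LinearMap.trace ℝ _ R := by
  have h_time : 0 ≤ (R (1, 0)).1 := by
    have h_zero (u : Fin 1 → EuclideanSpace ℝ (Fin n)) :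
        |(0 : MultilinearMap ℝ (fun _ : Fin 1 ↦ EuclideanSpace ℝ (Fin n)) ℝ) u| ≤ ∏ i, ‖u i‖ := by
      simp
    simpa using hR.abs_sum_mul_spatialBlock_le le_rfl h_zero h_zero
  obtain ⟨κ, _, ⟨a⟩, Γ, hΓ⟩ := exists_end_norm_apply_eq_mul n
  have h_abs : |LinearMap.trace ℝ _ (spatialBlock R)| ≤ (R (1, 0)).1 := by
    refine le_of_forall_pow_le_mul_pow h_time (C := Fintype.card κ) fun k hk ↦ ?_
    obtain ⟨w, hw⟩ := exists_multilinearMap_norm_eq_prod hΓ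
      ((EuclideanSpace.basisFun κ ℝ).norm_eq_one a) k
    exact hR.abs_trace_spatialBlock_pow_le hk (EuclideanSpace.basisFun κ ℝ) hw
  rw [trace_eq_fst_add_trace_spatialBlock]
  linarith [neg_le_of_abs_le h_abs]

/-- The Lorentz cone as a closed convex cone. -/
def lorentzProperCone (n : ℕ) : ProperCone ℝ (ℝ × EuclideanSpace ℝ (Fin n)) where
  carrier := lorentzCone n
  add_mem' hx hy := (norm_add_le _ _).trans (add_le_add hx hy)
  zero_mem' := norm_zero.le
  smul_mem' c x hx := by
    change ‖c.1 • x.2‖ ≤ c.1 * x.1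
    rw [norm_smul, Real.norm_of_nonneg c.2]
    exact mul_le_mul_of_nonneg_left hx c.2
  isClosed' := isClosed_le (by fun_prop) (by fun_prop)

theorem salient_lorentzProperCone (n : ℕ) :
    ((lorentzProperCone n : PointedCone ℝ (ℝ × EuclideanSpace ℝ (Fin n))) :
      ConvexCone ℝ (ℝ × EuclideanSpace ℝ (Fin n))).Salient := by
  intro x hx hx0 hx_neg
  have h_pos : ‖x.2‖ ≤ x.1 := hx
  have h_neg : ‖-x.2‖ ≤ -x.1 := hx_neg
  rw [norm_neg] at h_neg
  have h_norm := norm_nonneg x.2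
  exact hx0 (Prod.ext (by change x.1 = 0; linarith) (norm_eq_zero.1 (by linarith)))

theorem span_lorentzCone (n : ℕ) : Submodule.span ℝ (lorentzCone n) = ⊤ := by
  refine Submodule.eq_top_iff'.2 fun ⟨t, u⟩ ↦ ?_
  have h_light : (‖u‖, u) ∈ lorentzCone n := le_rfl (a := ‖u‖)
  have h_time : (1, 0) ∈ lorentzCone n := by simp [lorentzCone]
  have h_decomp : (t, u) = (‖u‖, u) + (t - ‖u‖) • ((1, 0) : ℝ × EuclideanSpace ℝ (Fin n)) := by
    simp
  rw [h_decomp]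
  exact add_mem (Submodule.subset_span h_light)
    (Submodule.smul_mem _ _ (Submodule.subset_span h_time))

end Lorentz

theorem lorentzCone_resilient_general {V : Type*} [NormedAddCommGroup V] [NormedSpace ℝ V]
    [FiniteDimensional ℝ V] (n : ℕ) {C : ProperCone ℝ V}
    (hC : ((C : PointedCone ℝ V) : ConvexCone ℝ V).Salient) :
    IsResilientPair (lorentzCone n) (C : Set V) := fun _ hP ↦
  isEntanglementBreaking_of_trace_comp_nonneg (C₁ := lorentzProperCone n) (span_lorentzCone n) hC
    fun _ hQ ↦ (hP.comp_left hQ).trace_nonneg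

/-- **Theorem.** For every `n ≥ 1`, the Lorentz cone `L_n` is resilient: every linear map
`P : ℝ^{n+1} → ℝ^{n+1}` with `P^{⊗k}(L_n^{⊗max k}) ⊆ L_n^{⊗min k}` for all `k ≥ 1` is
`(L_n, L_n)`-entanglement breaking. -/
theorem lorentzCone_resilient (n : ℕ) (hn : 1 ≤ n) :
    ∀ P : (ℝ × EuclideanSpace ℝ (Fin n)) →ₗ[ℝ] (ℝ × EuclideanSpace ℝ (Fin n)),
      (∀ k : ℕ, 1 ≤ k →
        Set.MapsTo (⇑(PiTensorProduct.map fun _ : Fin k => P))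
          (maxTensorPow (lorentzCone n) k) (minTensorPow (lorentzCone n) k)) →
      IsEntanglementBreaking (lorentzCone n) (lorentzCone n) P :=
  lorentzCone_resilient_general n (salient_lorentzProperCone n)

end
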